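/- Let f, g be real-valued differentiable monotonic functions on [a,b] with f' also monotonic, |f'(t)| ≤ θ < 1 for all t in [a,b], and |g(t)|, |g'(t)| ≪ 1. Then Σ_{a < n ≤ b} g(n) e(f(n)) = ∫_a^b g(t) e(f(t)) dt + O(1/(1−θ)). -/

import Mathlib

section

open Set MeasureTheory intervalIntegral

theorem mul_cos_le_sin {y : ℝ} (hy0 : 0 ≤ y) (hy : y ≤ Real.pi) :
    y * Real.cos y ≤ Real.sin y := by
  have hmono : MonotoneOn (fun y : ℝ => Real.sin y - y * Real.cos y) (Icc 0 Real.pi) := by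
    apply monotoneOn_of_hasDerivWithinAt_nonneg (f' := fun y => y * Real.sin y)
      (convex_Icc _ _) (by fun_prop)
    · intro x _
      have h := (Real.hasDerivAt_sin x).sub ((hasDerivAt_id x).mul (Real.hasDerivAt_cos x))
      refine (h.congr_deriv ?_).hasDerivWithinAt
      simp
    · intro x hx
      rw [interior_Icc] at hx
      exact mul_nonneg hx.1.le (Real.sin_nonneg_of_nonneg_of_le_pi hx.1.le hx.2.le)
  have h := hmono ⟨le_rfl, Real.pi_pos.le⟩ ⟨hy0, hy⟩ hy0
  simp only [Real.sin_zero, zero_mul, sub_zero] at h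
  linarith

/-- The regular part of the cotangent at the origin. -/
noncomputable def cotRegular (y : ℝ) : ℝ := Real.cos y / Real.sin y - 1 / y

theorem cotRegular_neg (y : ℝ) : cotRegular (-y) = -cotRegular y := by
  simp only [cotRegular, Real.cos_neg, Real.sin_neg, div_neg]
  ring

theorem cotRegular_nonpos {y : ℝ} (hy0 : 0 ≤ y) (hy : y < Real.pi) : cotRegular y ≤ 0 := by
  rcases hy0.eq_or_lt with rfl | hy0
  · simp [cotRegular]
  · rw [cotRegular, sub_nonpos, div_le_div_iff₀ (Real.sin_pos_of_pos_of_lt_pi hy0 hy) hy0]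
    linarith [mul_cos_le_sin hy0.le hy.le]

theorem cotRegular_antitoneOn_pos : AntitoneOn cotRegular (Ioo 0 Real.pi) := by
  have hd : ∀ x ∈ Ioo 0 Real.pi, HasDerivAt cotRegular
      (1 / x ^ 2 - 1 / Real.sin x ^ 2) x := by
    intro x hx
    have hs := Real.sin_pos_of_pos_of_lt_pi hx.1 hx.2
    have h := ((Real.hasDerivAt_cos x).div (Real.hasDerivAt_sin x) hs.ne').sub
      (hasDerivAt_inv hx.1.ne')
    have h' : HasDerivAt cotRegular _ x := h.congr_of_eventuallyEq
      (Filter.Eventually.of_forall fun z => by simp [cotRegular])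
    refine h'.congr_deriv ?_
    have := Real.sin_sq_add_cos_sq x
    have hn : -Real.sin x * Real.sin x - Real.cos x * Real.cos x = -1 := by linarith
    rw [hn]
    ring
  apply antitoneOn_of_hasDerivWithinAt_nonpos (f' := fun x => 1 / x ^ 2 - 1 / Real.sin x ^ 2)
    (convex_Ioo _ _)
  · exact fun x hx => (hd x hx).continuousAt.continuousWithinAt
  · intro x hx
    rw [interior_Ioo] at hx ⊢
    exact (hd x hx).hasDerivWithinAt
  · intro x hx
    rw [interior_Ioo] at hx
    have hs := Real.sin_pos_of_pos_of_lt_pi hx.1 hx.2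
    have := Real.sin_le hx.1.le
    rw [sub_nonpos]
    gcongr

theorem cotRegular_antitoneOn : AntitoneOn cotRegular (Ioo (-Real.pi) Real.pi) := by
  intro x hx y hy hxy
  rcases lt_or_ge 0 x with h0 | h0
  · exact cotRegular_antitoneOn_pos ⟨h0, hx.2⟩ ⟨h0.trans_le hxy, hy.2⟩ hxy
  have hneg : ∀ z, cotRegular z = -cotRegular (-z) := fun z => by rw [cotRegular_neg, neg_neg]
  rcases lt_or_ge y 0 with h1 | h1
  · rw [hneg x, hneg y, neg_le_neg_iff]
    exact cotRegular_antitoneOn_pos ⟨by linarith, by linarith [hy.1]⟩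
      ⟨by linarith, by linarith [hx.1]⟩ (by linarith)
  · have := cotRegular_nonpos (y := -x) (by linarith) (by linarith [hx.1])
    rw [hneg x]
    linarith [cotRegular_nonpos h1 hy.2]

theorem abs_cotRegular_pi_mul_le {x θ : ℝ} (hθ : θ < 1) (hx : |x| ≤ θ) :
    |cotRegular (Real.pi * x)| ≤ 1 / (1 - θ) := by
  have hpi := Real.pi_gt_three
  wlog h0 : 0 ≤ x generalizing x
  · have := this (x := -x) (by rwa [abs_neg]) (by linarith)
    rwa [mul_neg, cotRegular_neg, abs_neg] at this
  rw [abs_of_nonneg h0] at hx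
  have hxpi : Real.pi * x < Real.pi := by nlinarith
  have hle : 1 / (1 - x) ≤ 1 / (1 - θ) := by
    apply one_div_le_one_div_of_le <;> linarith
  rw [abs_of_nonpos (cotRegular_nonpos (by positivity) hxpi)]
  refine le_trans ?_ hle
  rcases le_or_gt x (1 / 2) with h2 | h2
  · have hanti := cotRegular_antitoneOn (a := Real.pi * x) (b := Real.pi * (1 / 2))
      ⟨by nlinarith, hxpi⟩ ⟨by linarith, by linarith⟩ (by gcongr)
    have hval : cotRegular (Real.pi * (1 / 2)) = -(2 / Real.pi) := by
      have : Real.pi * (1 / 2) = Real.pi / 2 := by ring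
      rw [cotRegular, this, Real.cos_pi_div_two]
      simp
    have h3 : 2 / Real.pi ≤ 1 := by rw [div_le_one (by linarith)]; linarith
    have h4 : 1 ≤ 1 / (1 - x) := by rw [le_div_iff₀ (by linarith)]; linarith
    linarith
  · have hr := cotRegular_nonpos (y := Real.pi - Real.pi * x) (by linarith) (by nlinarith)
    rw [cotRegular, Real.cos_pi_sub, Real.sin_pi_sub, neg_div] at hr
    rw [cotRegular]
    have h5 : 1 / (Real.pi * x) ≤ 2 / 3 := by
      rw [div_le_div_iff₀ (by positivity) (by norm_num)]; nlinarith
    have h6 : 1 / (Real.pi - Real.pi * x) ≤ (1 / 3) * (1 / (1 - x)) := by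
      rw [one_div_mul_one_div]
      apply one_div_le_one_div_of_le <;> nlinarith
    have h7 : 1 ≤ 1 / (1 - x) := by rw [le_div_iff₀ (by linarith)]; linarith
    linarith

/-- The function `t ↦ e(t) = exp(2πit)`. -/
noncomputable def expTwoPiI (x : ℝ) : ℂ := Complex.exp (2 * Real.pi * Complex.I * x)

theorem expTwoPiI_eq (x : ℝ) :
    expTwoPiI x = Complex.exp (Complex.I * ((2 * Real.pi * x : ℝ) : ℂ)) := by
  rw [expTwoPiI]; push_cast; ring_nf

theorem norm_expTwoPiI (x : ℝ) : ‖expTwoPiI x‖ = 1 := by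
  rw [expTwoPiI_eq, mul_comm, Complex.norm_exp_ofReal_mul_I]

theorem expTwoPiI_add (x y : ℝ) : expTwoPiI (x + y) = expTwoPiI x * expTwoPiI y := by
  rw [expTwoPiI, expTwoPiI, expTwoPiI, ← Complex.exp_add]; push_cast; ring_nf

theorem continuous_expTwoPiI : Continuous expTwoPiI := by
  unfold expTwoPiI; fun_prop

theorem norm_expTwoPiI_sub_le (x y : ℝ) :
    ‖expTwoPiI x - expTwoPiI y‖ ≤ 2 * Real.pi * |x - y| := by
  have h : expTwoPiI x - expTwoPiI y = expTwoPiI y * (expTwoPiI (x - y) - 1) := by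
    rw [mul_sub, ← expTwoPiI_add]; simp
  rw [h, norm_mul, norm_expTwoPiI, one_mul, expTwoPiI_eq]
  refine (Real.norm_exp_I_mul_ofReal_sub_one_le).trans ?_
  rw [Real.norm_eq_abs, abs_mul, abs_of_pos Real.two_pi_pos]

/-- The coefficient `1 / (e(x) - 1) - 1 / (2πix)`, regular on `(-1, 1)`. -/
noncomputable def linearPhaseCoeff (x : ℝ) : ℂ :=
  -(1 / 2) - Complex.I / 2 * (cotRegular (Real.pi * x) : ℂ)

theorem one_sub_integral_expTwoPiI {x : ℝ} (hx : |x| < 1) :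
    1 - ∫ s in (0 : ℝ)..1, expTwoPiI (x * s) = linearPhaseCoeff x * (expTwoPiI x - 1) := by
  rcases eq_or_ne x 0 with rfl | h0
  · simp [expTwoPiI]
  have hpi : (Real.pi : ℂ) ≠ 0 := by exact_mod_cast Real.pi_ne_zero
  have hxc : (x : ℂ) ≠ 0 := by exact_mod_cast h0
  have hint : ∫ s in (0 : ℝ)..1, expTwoPiI (x * s) =
      (expTwoPiI x - 1) / (2 * Real.pi * Complex.I * x) := by
    have hc : 2 * Real.pi * Complex.I * (x : ℂ) ≠ 0 := by simp [hpi, hxc]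
    have := integral_exp_mul_complex (a := 0) (b := 1) hc
    simp only [Complex.ofReal_zero, Complex.ofReal_one, mul_zero, mul_one, Complex.exp_zero] at this
    rw [expTwoPiI, ← this]
    refine integral_congr fun s _ => ?_
    simp only [expTwoPiI]; push_cast; ring_nf
  have hsin : Real.sin (Real.pi * x) ≠ 0 := by
    obtain ⟨h1, h2⟩ := abs_lt.mp hx
    rcases h0.lt_or_gt with h | h
    · exact (Real.sin_neg_of_neg_of_neg_pi_lt (by nlinarith [Real.pi_pos])
        (by nlinarith [Real.pi_pos])).ne
    · exact (Real.sin_pos_of_pos_of_lt_pi (by nlinarith [Real.pi_pos])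
        (by nlinarith [Real.pi_pos])).ne'
  have hsinc : (Real.sin (Real.pi * x) : ℂ) ≠ 0 := by exact_mod_cast hsin
  have hexp : expTwoPiI x =
      ((Real.cos (Real.pi * x) : ℂ) + Real.sin (Real.pi * x) * Complex.I) ^ 2 := by
    rw [Complex.ofReal_cos, Complex.ofReal_sin, ← Complex.exp_mul_I, ← Complex.exp_nat_mul,
      expTwoPiI]
    push_cast; ring_nf
  have hcs : (Real.sin (Real.pi * x) : ℂ) ^ 2 + (Real.cos (Real.pi * x) : ℂ) ^ 2 = 1 := by
    exact_mod_cast Real.sin_sq_add_cos_sq (Real.pi * x)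
  have hfac : expTwoPiI x - 1 = 2 * Complex.I * Real.sin (Real.pi * x) *
      ((Real.cos (Real.pi * x) : ℂ) + Real.sin (Real.pi * x) * Complex.I) := by
    rw [hexp]
    linear_combination hcs - (Real.sin (Real.pi * x) : ℂ) ^ 2 * Complex.I_sq
  have hcoeff : linearPhaseCoeff x = -(1 / 2) - Complex.I / 2 *
      (Real.cos (Real.pi * x) / Real.sin (Real.pi * x)) - 1 / (2 * Real.pi * Complex.I * x) := by
    rw [linearPhaseCoeff, cotRegular]
    push_cast
    field_simp
    ring_nf
    simp only [Complex.I_sq]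
    ring
  have hone : (-(1 / 2) - Complex.I / 2 *
      (Real.cos (Real.pi * x) / Real.sin (Real.pi * x))) * (expTwoPiI x - 1) = 1 := by
    rw [hfac]
    field_simp
    linear_combination hcs - Complex.I_sq * ((Real.cos (Real.pi * x) : ℂ) ^ 2 +
      (Real.sin (Real.pi * x) : ℂ) ^ 2 +
      Complex.I * Real.sin (Real.pi * x) * Real.cos (Real.pi * x))
  rw [hcoeff, hint, sub_mul, hone]
  ring

theorem norm_linearPhaseCoeff_le {x θ : ℝ} (hθ : θ < 1) (hx : |x| ≤ θ) :
    ‖linearPhaseCoeff x‖ ≤ 1 / (1 - θ) := by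
  have h1 := abs_cotRegular_pi_mul_le hθ hx
  have h0 : 0 ≤ θ := (abs_nonneg x).trans hx
  have h7 : 1 ≤ 1 / (1 - θ) := by rw [le_div_iff₀ (by linarith)]; linarith
  refine (norm_sub_le _ _).trans ?_
  rw [norm_mul, Complex.norm_real, Real.norm_eq_abs]
  norm_num
  norm_num at h1 h7
  linarith

theorem sum_mul_sub_eq {R : Type*} [CommRing R] (u w : ℕ → R) (K : ℕ) :
    ∑ k ∈ Finset.range (K + 1), u k * (w (k + 1) - w k) =
      u K * w (K + 1) - u 0 * w 0 - ∑ k ∈ Finset.range K, (u (k + 1) - u k) * w (k + 1) := by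
  induction K with
  | zero => simp; ring
  | succ K ih => rw [Finset.sum_range_succ, ih, Finset.sum_range_succ _ K]; ring

theorem norm_sum_mul_sub_le (u w : ℕ → ℂ) (K : ℕ) {U V : ℝ} (hw : ∀ k, ‖w k‖ ≤ 1)
    (hU : ∀ k ≤ K, ‖u k‖ ≤ U) (hV : ∑ k ∈ Finset.range K, ‖u (k + 1) - u k‖ ≤ V) :
    ‖∑ k ∈ Finset.range (K + 1), u k * (w (k + 1) - w k)‖ ≤ 2 * U + V := by
  have hm : ∀ (z : ℂ) k, ‖z * w k‖ ≤ ‖z‖ := fun z k => by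
    rw [norm_mul]; exact mul_le_of_le_one_right (norm_nonneg _) (hw k)
  rw [sum_mul_sub_eq]
  refine (norm_sub_le _ _).trans (add_le_add ((norm_sub_le _ _).trans ?_) ?_)
  · linarith [(hm (u K) (K + 1)).trans (hU K le_rfl), (hm (u 0) 0).trans (hU 0 K.zero_le)]
  · exact (norm_sum_le _ _).trans ((Finset.sum_le_sum fun k _ => hm _ _).trans hV)

theorem sum_abs_sub_le (u : ℕ → ℝ) (K : ℕ) {U : ℝ}
    (hu : (∀ k < K, u k ≤ u (k + 1)) ∨ (∀ k < K, u (k + 1) ≤ u k))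
    (hU : ∀ k ≤ K, |u k| ≤ U) :
    ∑ k ∈ Finset.range K, |u (k + 1) - u k| ≤ 2 * U := by
  have h0 := abs_le.mp (hU 0 K.zero_le)
  have hK := abs_le.mp (hU K le_rfl)
  rcases hu with hu | hu
  · rw [Finset.sum_congr rfl fun k hk =>
      abs_of_nonneg (sub_nonneg.mpr (hu k (Finset.mem_range.mp hk))), Finset.sum_range_sub]
    linarith
  · rw [Finset.sum_congr rfl fun k hk =>
      abs_of_nonpos (sub_nonpos.mpr (hu k (Finset.mem_range.mp hk))), Finset.sum_neg_distrib,
      Finset.sum_range_sub]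
    linarith

theorem abs_sub_le_of_monotoneOn_or_antitoneOn {h : ℝ → ℝ} {a b s t : ℝ}
    (hh : MonotoneOn h (Icc a b) ∨ AntitoneOn h (Icc a b)) (hs : s ∈ Icc a b)
    (ht : t ∈ Icc a b) : |h s - h t| ≤ |h b - h a| := by
  have hab := hs.1.trans hs.2
  have ha : a ∈ Icc a b := ⟨le_rfl, hab⟩
  have hb : b ∈ Icc a b := ⟨hab, le_rfl⟩
  rcases hh with hh | hh
  · refine le_trans ?_ (le_abs_self _)
    rw [abs_le]
    constructor <;> linarith [hh ha hs hs.1, hh ha ht ht.1, hh hs hb hs.2, hh ht hb ht.2]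
  · refine le_trans ?_ (neg_le_abs _)
    rw [abs_le]
    constructor <;> linarith [hh ha hs hs.1, hh ha ht ht.1, hh hs hb hs.2, hh ht hb ht.2]

theorem monotoneOn_or_antitoneOn_mono {h : ℝ → ℝ} {s t : Set ℝ}
    (hh : MonotoneOn h t ∨ AntitoneOn h t) (hst : s ⊆ t) :
    MonotoneOn h s ∨ AntitoneOn h s :=
  hh.imp (fun h => h.mono hst) (fun h => h.mono hst)

theorem exists_deriv_mul_eq {f f' : ℝ → ℝ} {x y : ℝ} (hxy : x ≤ y)
    (hf : ∀ t ∈ Icc x y, HasDerivAt f (f' t) t) :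
    ∃ ξ ∈ Icc x y, f y - f x = f' ξ * (y - x) := by
  rcases hxy.eq_or_lt with rfl | hlt
  · exact ⟨x, ⟨le_rfl, le_rfl⟩, by simp⟩
  · obtain ⟨ξ, hξ, h⟩ := exists_hasDerivAt_eq_slope f f' hlt
      (fun t ht => (hf t ht).continuousAt.continuousWithinAt)
      (fun t ht => hf t (Ioo_subset_Icc_self ht))
    refine ⟨ξ, Ioo_subset_Icc_self hξ, ?_⟩
    rw [h, div_mul_cancel₀ _ (by linarith)]

theorem abs_sub_linear_interpolation_le {f f' : ℝ → ℝ} {x t : ℝ}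
    (hf : ∀ t ∈ Icc x (x + 1), HasDerivAt f (f' t) t)
    (hf' : MonotoneOn f' (Icc x (x + 1)) ∨ AntitoneOn f' (Icc x (x + 1)))
    (ht : t ∈ Icc x (x + 1)) :
    |f x + (f (x + 1) - f x) * (t - x) - f t| ≤ |f' (x + 1) - f' x| := by
  obtain ⟨ξ, hξ, h1⟩ := exists_deriv_mul_eq ht.1
    (fun s hs => hf s ⟨hs.1, hs.2.trans ht.2⟩)
  obtain ⟨η, hη, h2⟩ := exists_deriv_mul_eq (by linarith) hf
  have heq : f x + (f (x + 1) - f x) * (t - x) - f t = (f' η - f' ξ) * (t - x) := by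
    rw [h2, ← sub_eq_zero]
    linear_combination (-1 : ℝ) * h1
  rw [heq, abs_mul, abs_of_nonneg (sub_nonneg.mpr ht.1)]
  exact (mul_le_of_le_one_right (abs_nonneg _) (by linarith [ht.2])).trans
    (abs_sub_le_of_monotoneOn_or_antitoneOn hf' hη ⟨hξ.1, hξ.2.trans ht.2⟩)

theorem norm_term_sub_integral_sub_le {f g f' : ℝ → ℝ} {x θ : ℝ} (hθ : θ < 1)
    (hf : ∀ t ∈ Icc x (x + 1), HasDerivAt f (f' t) t)
    (hgc : ContinuousOn g (Icc x (x + 1)))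
    (hgm : MonotoneOn g (Icc x (x + 1)) ∨ AntitoneOn g (Icc x (x + 1)))
    (hf' : MonotoneOn f' (Icc x (x + 1)) ∨ AntitoneOn f' (Icc x (x + 1)))
    (hfθ : ∀ t ∈ Icc x (x + 1), |f' t| ≤ θ) (hg1 : ∀ t ∈ Icc x (x + 1), |g t| ≤ 1) :
    ‖(g x : ℂ) * expTwoPiI (f x) - (∫ t in x..(x + 1), (g t : ℂ) * expTwoPiI (f t)) -
      g x * linearPhaseCoeff (f (x + 1) - f x) * (expTwoPiI (f (x + 1)) - expTwoPiI (f x))‖ ≤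
      |g (x + 1) - g x| + 2 * Real.pi * |f' (x + 1) - f' x| := by
  have hx1 : x ≤ x + 1 := by linarith
  obtain ⟨η, hη, h2⟩ := exists_deriv_mul_eq hx1 hf
  set α := f (x + 1) - f x with hα
  have hα1 : |α| < 1 := by
    rw [h2, add_sub_cancel_left, mul_one]
    exact (hfθ η hη).trans_lt hθ
  have hfc : ContinuousOn f (Icc x (x + 1)) :=
    fun t ht => (hf t ht).continuousAt.continuousWithinAt
  have hlin : ∫ t in x..(x + 1), (g x : ℂ) * expTwoPiI (f x + α * (t - x)) =
      g x * expTwoPiI (f x) * ∫ s in (0 : ℝ)..1, expTwoPiI (α * s) := by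
    rw [← intervalIntegral.integral_const_mul]
    have := intervalIntegral.integral_comp_sub_right (a := x) (b := x + 1)
      (fun s => (g x : ℂ) * expTwoPiI (f x) * expTwoPiI (α * s)) x
    simp only [sub_self, add_sub_cancel_left] at this
    rw [← this]
    refine integral_congr fun t _ => ?_
    simp only [expTwoPiI_add, mul_assoc]
  have hfx : expTwoPiI (f (x + 1)) = expTwoPiI (f x) * expTwoPiI α := by
    rw [← expTwoPiI_add, hα]; congr 1; ring
  have hi1 : IntervalIntegrable (fun t => (g x : ℂ) * expTwoPiI (f x + α * (t - x)))
      volume x (x + 1) := by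
    apply Continuous.intervalIntegrable
    have := continuous_expTwoPiI
    fun_prop
  have hi2 : IntervalIntegrable (fun t => (g t : ℂ) * expTwoPiI (f t)) volume x (x + 1) := by
    apply ContinuousOn.intervalIntegrable_of_Icc hx1
    exact (Complex.continuous_ofReal.comp_continuousOn hgc).mul
      (continuous_expTwoPiI.comp_continuousOn hfc)
  have hmain : (g x : ℂ) * expTwoPiI (f x) - (∫ t in x..(x + 1), (g t : ℂ) * expTwoPiI (f t)) -
      g x * linearPhaseCoeff α * (expTwoPiI (f (x + 1)) - expTwoPiI (f x)) =
      ∫ t in x..(x + 1), ((g x : ℂ) * expTwoPiI (f x + α * (t - x)) -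
        (g t : ℂ) * expTwoPiI (f t)) := by
    rw [intervalIntegral.integral_sub hi1 hi2, hlin, hfx]
    linear_combination (g x : ℂ) * expTwoPiI (f x) * one_sub_integral_expTwoPiI hα1
  rw [hmain]
  have hbound := intervalIntegral.norm_integral_le_of_norm_le_const (a := x) (b := x + 1)
    (C := |g (x + 1) - g x| + 2 * Real.pi * |f' (x + 1) - f' x|)
    (f := fun t => (g x : ℂ) * expTwoPiI (f x + α * (t - x)) - (g t : ℂ) * expTwoPiI (f t)) ?_
  · simpa using hbound
  intro t ht
  rw [uIoc_of_le hx1] at ht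
  have ht := Ioc_subset_Icc_self ht
  have hx : x ∈ Icc x (x + 1) := ⟨le_rfl, hx1⟩
  have hsplit : (g x : ℂ) * expTwoPiI (f x + α * (t - x)) - (g t : ℂ) * expTwoPiI (f t) =
      ((g x - g t : ℝ) : ℂ) * expTwoPiI (f t) +
        g x * (expTwoPiI (f x + α * (t - x)) - expTwoPiI (f t)) := by
    push_cast; ring
  rw [hsplit]
  refine (norm_add_le _ _).trans (add_le_add ?_ ?_)
  · rw [norm_mul, norm_expTwoPiI, mul_one, Complex.norm_real]
    exact abs_sub_le_of_monotoneOn_or_antitoneOn hgm hx ht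
  · rw [norm_mul, Complex.norm_real]
    refine (mul_le_of_le_one_left (norm_nonneg _) (hg1 x hx)).trans
      ((norm_expTwoPiI_sub_le _ _).trans ?_)
    have := abs_sub_linear_interpolation_le hf hf' ht
    have := Real.pi_pos
    gcongr

theorem norm_sum_sub_integral_le {f g f' : ℝ → ℝ} {x θ : ℝ} (K : ℕ) (hθ : θ < 1)
    (hf : ∀ t ∈ Icc x (x + K), HasDerivAt f (f' t) t)
    (hgc : ContinuousOn g (Icc x (x + K)))
    (hgm : MonotoneOn g (Icc x (x + K)) ∨ AntitoneOn g (Icc x (x + K)))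
    (hf' : MonotoneOn f' (Icc x (x + K)) ∨ AntitoneOn f' (Icc x (x + K)))
    (hfθ : ∀ t ∈ Icc x (x + K), |f' t| ≤ θ) (hg1 : ∀ t ∈ Icc x (x + K), |g t| ≤ 1) :
    ‖∑ k ∈ Finset.range K, (g (x + k) : ℂ) * expTwoPiI (f (x + k)) -
      ∫ t in x..(x + K), (g t : ℂ) * expTwoPiI (f t)‖ ≤ 23 / (1 - θ) := by
  have hmem : ∀ k ≤ K, x + (k : ℝ) ∈ Icc x (x + K) := fun k hk => by
    have : (k : ℝ) ≤ K := by exact_mod_cast hk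
    exact ⟨by linarith [k.cast_nonneg (α := ℝ)], by linarith⟩
  have hθ0 : 0 ≤ θ := (abs_nonneg _).trans (hfθ _ (hmem 0 K.zero_le))
  have hU : 1 ≤ 1 / (1 - θ) := by rw [le_div_iff₀ (by linarith)]; linarith
  have hsub : ∀ k < K, Icc (x + k) (x + k + 1) ⊆ Icc x (x + K) := fun k hk => by
    have h1 : (k : ℝ) + 1 ≤ K := by exact_mod_cast hk
    exact Icc_subset_Icc (by linarith [k.cast_nonneg (α := ℝ)]) (by linarith)
  have hmonoSeq : ∀ h : ℝ → ℝ, (MonotoneOn h (Icc x (x + K)) ∨ AntitoneOn h (Icc x (x + K))) →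
      ((∀ k < K, h (x + k) ≤ h (x + (k + 1 : ℕ))) ∨
        (∀ k < K, h (x + (k + 1 : ℕ)) ≤ h (x + k))) := fun h hh =>
    hh.imp (fun hh k hk => hh (hmem k hk.le) (hmem (k + 1) hk) (by push_cast; linarith))
      (fun hh k hk => hh (hmem k hk.le) (hmem (k + 1) hk) (by push_cast; linarith))
  have hgvar := sum_abs_sub_le (fun k => g (x + k)) K (hmonoSeq g hgm)
    (fun k hk => hg1 _ (hmem k hk))
  have hfvar := sum_abs_sub_le (fun k => f' (x + k)) K (hmonoSeq f' hf')
    (fun k hk => hfθ _ (hmem k hk))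
  have hint : ∑ k ∈ Finset.range K, ∫ t in (x + k)..(x + (k + 1 : ℕ)),
      (g t : ℂ) * expTwoPiI (f t) = ∫ t in x..(x + K), (g t : ℂ) * expTwoPiI (f t) := by
    have := intervalIntegral.sum_integral_adjacent_intervals (μ := volume)
      (f := fun t => (g t : ℂ) * expTwoPiI (f t)) (a := fun k : ℕ => x + (k : ℝ)) (n := K) ?_
    · simpa using this
    intro k hk
    apply ContinuousOn.intervalIntegrable_of_Icc (by push_cast; linarith)
    have hs : Icc (x + (k : ℝ)) (x + (k + 1 : ℕ)) ⊆ Icc x (x + K) := by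
      have := hsub k hk
      rwa [Nat.cast_add_one, ← add_assoc]
    exact (Complex.continuous_ofReal.comp_continuousOn (hgc.mono hs)).mul
      (continuous_expTwoPiI.comp_continuousOn
        fun t ht => (hf t (hs ht)).continuousAt.continuousWithinAt)
  let α : ℕ → ℝ := fun k => f (x + (k + 1 : ℕ)) - f (x + k)
  let u : ℕ → ℂ := fun k => g (x + k) * linearPhaseCoeff (α k)
  let w : ℕ → ℂ := fun k => expTwoPiI (f (x + k))
  have hlocal : ‖∑ k ∈ Finset.range K, ((g (x + k) : ℂ) * expTwoPiI (f (x + k)) -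
      (∫ t in (x + k)..(x + (k + 1 : ℕ)), (g t : ℂ) * expTwoPiI (f t)) -
      u k * (w (k + 1) - w k))‖ ≤ 2 * 1 + 2 * Real.pi * (2 * θ) := by
    refine (norm_sum_le _ _).trans (le_trans (Finset.sum_le_sum fun k hk => ?_)
      (le_of_eq_of_le (Finset.sum_add_distrib
        (f := fun k : ℕ => |g (x + (k + 1 : ℕ)) - g (x + k)|)
        (g := fun k : ℕ => 2 * Real.pi * |f' (x + (k + 1 : ℕ)) - f' (x + k)|)) ?_))
    · have hs := hsub k (Finset.mem_range.mp hk)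
      have := norm_term_sub_integral_sub_le (x := x + k) hθ (fun t ht => hf t (hs ht))
        (hgc.mono hs) (monotoneOn_or_antitoneOn_mono hgm hs)
        (monotoneOn_or_antitoneOn_mono hf' hs) (fun t ht => hfθ t (hs ht))
        (fun t ht => hg1 t (hs ht))
      simpa only [u, w, α, Nat.cast_add_one, ← add_assoc] using this
    · rw [← Finset.mul_sum]
      have := Real.pi_pos
      gcongr
  have habel : ‖∑ k ∈ Finset.range K, u k * (w (k + 1) - w k)‖ ≤ 5 * (1 / (1 - θ)) := by
    rcases K with _ | J
    · simp; linarith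
    have hξ : ∀ k < J + 1, ∃ ξ ∈ Icc (x + (k : ℝ)) (x + k + 1), α k = f' ξ := fun k hk => by
      obtain ⟨ξ, hξ, h⟩ := exists_deriv_mul_eq (f := f) (f' := f') (x := x + k)
        (y := x + k + 1) (by linarith) (fun t ht => hf t (hsub k hk ht))
      refine ⟨ξ, hξ, ?_⟩
      simp only [α, Nat.cast_add_one, ← add_assoc]
      rw [h]; ring
    have hαθ : ∀ k < J + 1, |α k| ≤ θ := fun k hk => by
      obtain ⟨ξ, hξ, h⟩ := hξ k hk
      rw [h]; exact hfθ ξ (hsub k hk hξ)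
    have hαI : ∀ k < J + 1, Real.pi * α k ∈ Ioo (-Real.pi) Real.pi := fun k hk => by
      have := abs_lt.mp ((hαθ k hk).trans_lt hθ)
      have := Real.pi_pos
      constructor <;> nlinarith
    have hαm : (∀ k < J, α k ≤ α (k + 1)) ∨ (∀ k < J, α (k + 1) ≤ α k) := by
      refine hf'.imp (fun hm k hk => ?_) (fun hm k hk => ?_) <;>
      · obtain ⟨ξ, hξ1, h1⟩ := hξ k (by omega)
        obtain ⟨η, hη1, h2⟩ := hξ (k + 1) (by omega)
        rw [h1, h2]
        refine hm (hsub k (by omega) hξ1) (hsub (k + 1) (by omega) hη1) ?_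
        have := hη1.1
        push_cast at this
        linarith [hξ1.2]
    have hcvar := sum_abs_sub_le (fun k => cotRegular (Real.pi * α k)) J
      (hαm.symm.imp
        (fun h k hk => cotRegular_antitoneOn (hαI _ (by omega)) (hαI _ (by omega))
          (mul_le_mul_of_nonneg_left (h k hk) Real.pi_pos.le))
        (fun h k hk => cotRegular_antitoneOn (hαI _ (by omega)) (hαI _ (by omega))
          (mul_le_mul_of_nonneg_left (h k hk) Real.pi_pos.le)))
      (fun k hk => abs_cotRegular_pi_mul_le hθ (hαθ k (by omega)))
    have hφ : ∀ k < J + 1, ‖linearPhaseCoeff (α k)‖ ≤ 1 / (1 - θ) :=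
      fun k hk => norm_linearPhaseCoeff_le hθ (hαθ k hk)
    have hgle : ∀ k ≤ J + 1, ‖(g (x + k) : ℂ)‖ ≤ 1 := fun k hk => by
      rw [Complex.norm_real]; exact hg1 _ (hmem k hk)
    rw [Finset.sum_range_succ] at hgvar
    have hgvar' := (le_add_of_nonneg_right (abs_nonneg _)).trans hgvar
    have := norm_sum_mul_sub_le u w J (U := 1 / (1 - θ)) (V := 3 * (1 / (1 - θ)))
      (fun k => (norm_expTwoPiI _).le)
      (fun k hk => by
        rw [norm_mul]
        exact (mul_le_of_le_one_left (norm_nonneg _) (hgle k (by omega))).trans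
          (hφ k (by omega))) ?_
    · linarith
    calc ∑ k ∈ Finset.range J, ‖u (k + 1) - u k‖
        ≤ ∑ k ∈ Finset.range J,
            (1 / 2 * |cotRegular (Real.pi * α (k + 1)) - cotRegular (Real.pi * α k)| +
            1 / (1 - θ) * |g (x + (k + 1 : ℕ)) - g (x + k)|) := by
          refine Finset.sum_le_sum fun k hk => ?_
          have hk := Finset.mem_range.mp hk
          have hsplit : u (k + 1) - u k = g (x + (k + 1 : ℕ)) *
              (-(Complex.I / 2) * ((cotRegular (Real.pi * α (k + 1)) -
                cotRegular (Real.pi * α k) : ℝ) : ℂ)) +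
              linearPhaseCoeff (α k) * ((g (x + (k + 1 : ℕ)) - g (x + k) : ℝ) : ℂ) := by
            simp only [u, linearPhaseCoeff]; push_cast; ring
          rw [hsplit]
          refine (norm_add_le _ _).trans (add_le_add ?_ ?_)
          · rw [norm_mul]
            refine (mul_le_of_le_one_left (norm_nonneg _) (hgle (k + 1) (by omega))).trans ?_
            rw [norm_mul, Complex.norm_real, Real.norm_eq_abs]
            simp
          · rw [norm_mul, Complex.norm_real, Real.norm_eq_abs]
            exact mul_le_mul_of_nonneg_right (hφ k (by omega)) (abs_nonneg _)
      _ ≤ 1 / 2 * (2 * (1 / (1 - θ))) + 1 / (1 - θ) * (2 * 1) := by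
          rw [Finset.sum_add_distrib, ← Finset.mul_sum, ← Finset.mul_sum]
          exact add_le_add (mul_le_mul_of_nonneg_left hcvar (by norm_num))
            (mul_le_mul_of_nonneg_left hgvar' (by linarith))
      _ = 3 * (1 / (1 - θ)) := by ring
  rw [Finset.sum_sub_distrib, Finset.sum_sub_distrib, hint] at hlocal
  have htri := norm_add_le_of_le hlocal habel
  rw [sub_add_cancel] at htri
  refine htri.trans ?_
  have h4 : Real.pi * θ ≤ 4 := by nlinarith [Real.pi_lt_four, Real.pi_pos]
  have h23 : 23 / (1 - θ) = 23 * (1 / (1 - θ)) := by ring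
  rw [h23]
  linarith

end


/-- Truncated Poisson summation (Titchmarsh, Lemma 4.8): under the stated
monotonicity and derivative conditions, the exponential sum is approximated
by the corresponding integral with error `O(1/(1-θ))`. -/
theorem sum_eq_integral_of_small_derivative :
    ∃ C : ℝ, 0 < C ∧
      ∀ (a b θ : ℝ) (f g f' g' : ℝ → ℝ),
        a ≤ b →
        (∀ t ∈ Set.Icc a b, HasDerivAt f (f' t) t) →
        (∀ t ∈ Set.Icc a b, HasDerivAt g (g' t) t) →
        (MonotoneOn f (Set.Icc a b) ∨ AntitoneOn f (Set.Icc a b)) →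
        (MonotoneOn g (Set.Icc a b) ∨ AntitoneOn g (Set.Icc a b)) →
        (MonotoneOn f' (Set.Icc a b) ∨ AntitoneOn f' (Set.Icc a b)) →
        θ < 1 →
        (∀ t ∈ Set.Icc a b, |f' t| ≤ θ) →
        (∀ t ∈ Set.Icc a b, |g t| ≤ 1) →
        (∀ t ∈ Set.Icc a b, |g' t| ≤ 1) →
        ‖(∑ n ∈ Finset.Ioc ⌊a⌋ ⌊b⌋,
              (g n : ℂ) * Complex.exp (2 * Real.pi * Complex.I * f n)) -
            ∫ t in a..b, (g t : ℂ) * Complex.exp (2 * Real.pi * Complex.I * f t)‖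
          ≤ C / (1 - θ) := by
  refine ⟨30, by norm_num, ?_⟩
  intro a b θ f g f' g' hab hf hg _ hgm hf' hθ hfθ hg1 _
  change ‖(∑ n ∈ Finset.Ioc ⌊a⌋ ⌊b⌋, (g n : ℂ) * expTwoPiI (f n)) -
    ∫ t in a..b, (g t : ℂ) * expTwoPiI (f t)‖ ≤ _
  have hθ0 : 0 ≤ θ := (abs_nonneg _).trans (hfθ a ⟨le_rfl, hab⟩)
  have hU : 1 ≤ 1 / (1 - θ) := by rw [le_div_iff₀ (by linarith)]; linarith
  have hCU : ∀ C : ℝ, C / (1 - θ) = C * (1 / (1 - θ)) := fun C => by ring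
  have hgc : ContinuousOn g (Set.Icc a b) :=
    fun t ht => (hg t ht).continuousAt.continuousWithinAt
  have hterm : ∀ t ∈ Set.Icc a b, ‖(g t : ℂ) * expTwoPiI (f t)‖ ≤ 1 := fun t ht => by
    rw [norm_mul, norm_expTwoPiI, mul_one, Complex.norm_real]
    exact hg1 t ht
  have hcont : ContinuousOn (fun t => (g t : ℂ) * expTwoPiI (f t)) (Set.Icc a b) :=
    (Complex.continuous_ofReal.comp_continuousOn hgc).mul
      (continuous_expTwoPiI.comp_continuousOn
        fun t ht => (hf t ht).continuousAt.continuousWithinAt)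
  have hshort : ∀ c d, a ≤ c → c ≤ d → d ≤ b → d ≤ c + 1 →
      ‖∫ t in c..d, (g t : ℂ) * expTwoPiI (f t)‖ ≤ 1 := fun c d hac hcd hdb hd => by
    have := intervalIntegral.norm_integral_le_of_norm_le_const (a := c) (b := d) (C := 1)
      (f := fun t => (g t : ℂ) * expTwoPiI (f t)) fun t ht => by
        rw [Set.uIoc_of_le hcd] at ht
        exact hterm t ⟨hac.trans ht.1.le, ht.2.trans hdb⟩
    rw [abs_of_nonneg (by linarith)] at this
    linarith
  have hfa := Int.floor_le a
  have hfa' := Int.lt_floor_add_one a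
  have hfb := Int.floor_le b
  have hfb' := Int.lt_floor_add_one b
  rcases (Int.floor_mono hab).eq_or_lt with heq | hlt
  · rw [heq, Finset.Ioc_self, Finset.sum_empty, zero_sub, norm_neg, hCU]
    rw [heq] at hfa
    linarith [hshort a b le_rfl hab le_rfl (by linarith)]
  obtain ⟨K, hK⟩ := Int.le.dest (Int.add_one_le_iff.mpr hlt)
  have hKr : (⌊a⌋ : ℝ) + 1 + K = ⌊b⌋ := by exact_mod_cast hK
  have hK0 : (0 : ℝ) ≤ K := K.cast_nonneg
  set x : ℝ := (⌊a⌋ : ℝ) + 1 with hx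
  have hsub : Set.Icc x (x + K) ⊆ Set.Icc a b := Set.Icc_subset_Icc (by linarith) (by linarith)
  have hsum : ∑ n ∈ Finset.Ioc ⌊a⌋ ⌊b⌋, (g n : ℂ) * expTwoPiI (f n) =
      ∑ k ∈ Finset.range (K + 1), (g (x + k) : ℂ) * expTwoPiI (f (x + k)) := by
    symm
    refine Finset.sum_bij (fun k _ => ⌊a⌋ + 1 + (k : ℤ)) ?_ ?_ ?_ ?_
    · intro k hk
      rw [Finset.mem_range] at hk
      rw [Finset.mem_Ioc]
      omega
    · intro k _ l _ h
      omega
    · intro n hn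
      rw [Finset.mem_Ioc] at hn
      exact ⟨(n - ⌊a⌋ - 1).toNat, by rw [Finset.mem_range]; omega, by omega⟩
    · intro k _
      rw [hx]
      push_cast
      rfl
  have hii : ∀ c d, a ≤ c → c ≤ d → d ≤ b →
      IntervalIntegrable (fun t => (g t : ℂ) * expTwoPiI (f t)) MeasureTheory.volume c d :=
    fun c d hac hcd hdb =>
      (hcont.mono (Set.Icc_subset_Icc hac hdb)).intervalIntegrable_of_Icc hcd
  have hsplit : ∫ t in a..b, (g t : ℂ) * expTwoPiI (f t) =
      (∫ t in a..x, (g t : ℂ) * expTwoPiI (f t)) +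
      (∫ t in x..(x + K), (g t : ℂ) * expTwoPiI (f t)) +
      ∫ t in (x + K)..b, (g t : ℂ) * expTwoPiI (f t) := by
    rw [intervalIntegral.integral_add_adjacent_intervals
        (hii a x le_rfl (by linarith) (by linarith))
        (hii x (x + K) (by linarith) (by linarith) (by linarith)),
      intervalIntegral.integral_add_adjacent_intervals
        (hii a (x + K) le_rfl (by linarith) (by linarith))
        (hii (x + K) b (by linarith) (by linarith) le_rfl)]
  have hmain := norm_sum_sub_integral_le K hθ (fun t ht => hf t (hsub ht)) (hgc.mono hsub)
    (monotoneOn_or_antitoneOn_mono hgm hsub) (monotoneOn_or_antitoneOn_mono hf' hsub)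
    (fun t ht => hfθ t (hsub ht)) (fun t ht => hg1 t (hsub ht))
  have hfirst := hshort a x le_rfl (by linarith) (by linarith) (by linarith)
  have hlast := hshort (x + K) b (by linarith) (by linarith) le_rfl (by linarith)
  have hend := hterm (x + K) (hsub ⟨by linarith, le_rfl⟩)
  have htri := norm_sub_le_of_le (norm_sub_le_of_le (norm_add_le_of_le hmain hend) hfirst) hlast
  rw [hsum, Finset.sum_range_succ, hsplit]
  refine le_of_eq_of_le (congrArg _ ?_) (htri.trans ?_)
  · ring
  · rw [hCU, hCU 30]
    linarith
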